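/- Let r ≥ 1 be an integer, let G = (V,E) be a connected finite simple graph, and let U ⊆ V be a set with V \ U nonempty such that every vertex v ∈ V satisfies dist_G(v, V \ U) ≤ r. Let C_1, …, C_k be the connected components of the subgraph of G induced on V \ U, and define the graph G' on vertex set {1, …, k} in which distinct i and j are adjacent if and only if dist_G(C_i, C_j) ≤ 2r + 1. Then G' is connected. -/

import Mathlib

/-!
Every vertex is within distance `r` of some component, since it is within distance `r` of a vertex
outside `U`, and every such vertex lies in a component (`exists_isCompOf`). If `C i` and `C j` are
within distance `r` of `v` and `w`, and `v`, `w` are equal or adjacent, then `C i` and `C j` are at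
distance at most `2r + 1` by the triangle inequality. Walking along a walk of `G` that starts next
to one component and ends next to another, one therefore moves between components that are equal or
adjacent in the new graph (`reachable_of_walk`).
-/

open SimpleGraph

variable {V : Type*}

/-- `C` is a connected component of the subgraph of `G` induced on `W`:
a maximal nonempty subset of `W` inducing a connected subgraph. -/
def IsCompOf (G : SimpleGraph V) (W : Set V) (C : Set V) : Prop :=
  C ⊆ W ∧ C.Nonempty ∧ (G.induce C).Connected ∧
    ∀ D : Set V, C ⊆ D → D ⊆ W → (G.induce D).Connected → D = C

/-- By finiteness, `{u}` extends to a maximal subset of `W` inducing a connected subgraph. -/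
theorem exists_isCompOf [Finite V] (G : SimpleGraph V) (W : Set V) {u : V} (hu : u ∈ W) :
    ∃ D, IsCompOf G W D ∧ u ∈ D := by
  have h0 : ({u} : Set V) ⊆ W ∧ (G.induce ({u} : Set V)).Connected :=
    ⟨by simpa using hu, by
      haveI : Nonempty ({u} : Set V) := ⟨⟨u, rfl⟩⟩
      exact ⟨SimpleGraph.Preconnected.of_subsingleton⟩⟩
  obtain ⟨D, hD, hmax⟩ := Finite.exists_le_maximal
    (p := fun D : Set V => D ⊆ W ∧ (G.induce D).Connected) h0
  have huD : u ∈ D := hD rfl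
  exact ⟨D, ⟨hmax.prop.1, ⟨u, huD⟩, hmax.prop.2, fun D' h1 h2 h3 =>
    Set.Subset.antisymm (hmax.le_of_ge ⟨h2, h3⟩ h1) h1⟩, huD⟩

/-- Sets of a family that come within distance `r` of the two ends of a walk are joined in the
graph linking sets at distance at most `2r + 1`, provided every vertex is within distance `r` of
some set of the family. -/
theorem reachable_of_walk {ι : Type*} (G : SimpleGraph V) (r : ℕ) (C : ι → Set V)
    (hnear : ∀ v, ∃ i, ∃ a ∈ C i, G.edist v a ≤ (r : ℕ∞)) {v w : V} (p : G.Walk v w) :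
    ∀ i j, (∃ a ∈ C i, G.edist v a ≤ (r : ℕ∞)) → (∃ b ∈ C j, G.edist w b ≤ (r : ℕ∞)) →
      (SimpleGraph.fromRel (fun i j : ι =>
        ∃ a ∈ C i, ∃ b ∈ C j, G.edist a b ≤ ((2 * r + 1 : ℕ) : ℕ∞))).Reachable i j := by
  have step : ∀ {x y : V} (i j : ι), G.edist x y ≤ 1 →
      (∃ a ∈ C i, G.edist x a ≤ (r : ℕ∞)) → (∃ b ∈ C j, G.edist y b ≤ (r : ℕ∞)) →
      (SimpleGraph.fromRel (fun i j : ι =>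
        ∃ a ∈ C i, ∃ b ∈ C j, G.edist a b ≤ ((2 * r + 1 : ℕ) : ℕ∞))).Reachable i j := by
    rintro x y i j hxy ⟨a, ha, hxa⟩ ⟨b, hb, hyb⟩
    by_cases hij : i = j
    · exact hij ▸ SimpleGraph.Reachable.refl i
    · refine SimpleGraph.Adj.reachable
        ((SimpleGraph.fromRel_adj _ _ _).2 ⟨hij, Or.inl ⟨a, ha, b, hb, ?_⟩⟩)
      calc G.edist a b ≤ G.edist a x + (G.edist x y + G.edist y b) :=
            SimpleGraph.edist_triangle.trans (by gcongr; exact SimpleGraph.edist_triangle)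
        _ ≤ r + (1 + r) := by
            rw [SimpleGraph.edist_comm (u := a)]
            gcongr
        _ = ((2 * r + 1 : ℕ) : ℕ∞) := by push_cast; ring
  induction p with
  | nil => exact fun i j hi hj => step i j (by simp) hi hj
  | cons h _ ih =>
    intro i j hi hj
    obtain ⟨l, hl⟩ := hnear _
    exact (step i l (SimpleGraph.edist_eq_one_iff_adj.2 h).le hi hl).trans (ih l j hl hj)

theorem stmt13 [Fintype V] (G : SimpleGraph V) (hG : G.Connected) (r : ℕ) (hr : 1 ≤ r)
    (U : Set V) (hne : (Uᶜ : Set V).Nonempty)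
    (hclose : ∀ v : V, ∃ u ∈ (Uᶜ : Set V), G.edist v u ≤ (r : ℕ∞))
    (k : ℕ) (C : Fin k → Set V)
    (hcomp : ∀ i, IsCompOf G Uᶜ (C i))
    (hinj : Function.Injective C)
    (hall : ∀ D : Set V, IsCompOf G Uᶜ D → ∃ i, C i = D) :
    (SimpleGraph.fromRel (fun i j : Fin k =>
      ∃ a ∈ C i, ∃ b ∈ C j, G.edist a b ≤ ((2 * r + 1 : ℕ) : ℕ∞))).Connected := by
  have hnear : ∀ v, ∃ i, ∃ a ∈ C i, G.edist v a ≤ (r : ℕ∞) := by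
    intro v
    obtain ⟨u, hu, hvu⟩ := hclose v
    obtain ⟨D, hD, huD⟩ := exists_isCompOf G Uᶜ hu
    obtain ⟨i, rfl⟩ := hall D hD
    exact ⟨i, u, huD, hvu⟩
  obtain ⟨v₀, -⟩ := hne
  haveI : Nonempty (Fin k) := ⟨(hnear v₀).choose⟩
  refine ⟨fun i j => ?_⟩
  obtain ⟨a, ha⟩ := (hcomp i).2.1
  obtain ⟨b, hb⟩ := (hcomp j).2.1
  obtain ⟨p⟩ := hG.preconnected a b
  exact reachable_of_walk G r C hnear p i j ⟨a, ha, by simp⟩ ⟨b, hb, by simp⟩
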